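/- For every positive integer M and all disjoint subsets S, T ⊆ V with |S ∪ T| ≤ M, one has ∑_{j∈T} (E(S) − E(S∪{j})) ≥ γ_D · (E(S) − E(S∪T)), where γ_D = λ/(λ + M·G²). Equivalently, for any constant L_max, the set function F_λ(S) = L_max − E(S) is γ_D-weakly submodular on subsets of size at most M. -/

import Mathlib

open scoped BigOperators

/-- The regularized gradient-matching objective
`ℓ(w) = ‖∑ᵢ wᵢ gᵢ − b‖₂² + λ ∑ᵢ wᵢ²`. -/
noncomputable def ell {V : Type*} [Fintype V] {d : ℕ}
    (g : V → EuclideanSpace ℝ (Fin d)) (b : EuclideanSpace ℝ (Fin d))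
    (lam : ℝ) (w : V → ℝ) : ℝ :=
  ‖(∑ i, w i • g i) - b‖ ^ 2 + lam * ∑ i, (w i) ^ 2

/-- `E(S) = inf { ℓ(w) : w supported on S }`. -/
noncomputable def EErr {V : Type*} [Fintype V] {d : ℕ}
    (g : V → EuclideanSpace ℝ (Fin d)) (b : EuclideanSpace ℝ (Fin d))
    (lam : ℝ) (S : Finset V) : ℝ :=
  sInf {y | ∃ w : V → ℝ, (∀ i ∉ S, w i = 0) ∧ y = ell g b lam w}

noncomputable def gradC {V : Type*} [Fintype V] {d : ℕ}
    (g : V → EuclideanSpace ℝ (Fin d)) (b : EuclideanSpace ℝ (Fin d))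
    (lam : ℝ) (u : V → ℝ) (i : V) : ℝ :=
  2 * inner ℝ ((∑ i, u i • g i) - b) (g i) + 2 * lam * u i

theorem ell_add {V : Type*} [Fintype V] {d : ℕ}
    (g : V → EuclideanSpace ℝ (Fin d)) (b : EuclideanSpace ℝ (Fin d))
    (lam : ℝ) (u h : V → ℝ) :
    ell g b lam (u + h) = ell g b lam u + ∑ i, gradC g b lam u i * h i
      + ‖∑ i, h i • g i‖ ^ 2 + lam * ∑ i, (h i) ^ 2 := by
  have h1 : (∑ i, (u + h) i • g i) - b = ((∑ i, u i • g i) - b) + ∑ i, h i • g i := by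
    simp only [Pi.add_apply, add_smul, Finset.sum_add_distrib]
    abel
  have h2 : ∑ i, gradC g b lam u i * h i
      = 2 * inner ℝ ((∑ i, u i • g i) - b) (∑ i, h i • g i) + 2 * lam * ∑ i, u i * h i := by
    rw [inner_sum, Finset.mul_sum, Finset.mul_sum, ← Finset.sum_add_distrib]
    refine Finset.sum_congr rfl fun i _ => ?_
    rw [inner_smul_right, gradC]
    ring
  have h3 : ∑ i, ((u + h) i) ^ 2 = ∑ i, (u i) ^ 2 + 2 * ∑ i, u i * h i + ∑ i, (h i) ^ 2 := by
    rw [Finset.mul_sum, ← Finset.sum_add_distrib, ← Finset.sum_add_distrib]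
    refine Finset.sum_congr rfl fun i _ => ?_
    simp only [Pi.add_apply]
    ring
  rw [ell, ell, h1, h2, h3, norm_add_sq_real]
  ring

theorem ell_single {V : Type*} [Fintype V] [DecidableEq V] {d : ℕ}
    (g : V → EuclideanSpace ℝ (Fin d)) (b : EuclideanSpace ℝ (Fin d))
    (lam : ℝ) (u : V → ℝ) (j : V) (t : ℝ) :
    ell g b lam (u + Pi.single j t) = ell g b lam u + gradC g b lam u j * t
      + (‖g j‖ ^ 2 + lam) * t ^ 2 := by
  have h1 : ∑ i, gradC g b lam u i * (Pi.single j t : V → ℝ) i = gradC g b lam u j * t := by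
    rw [Finset.sum_eq_single j] <;> simp +contextual
  have h2 : ∑ i, (Pi.single j t : V → ℝ) i • g i = t • g j := by
    rw [Finset.sum_eq_single j] <;> simp +contextual
  have h3 : ∑ i, ((Pi.single j t : V → ℝ) i) ^ 2 = t ^ 2 := by
    rw [Finset.sum_eq_single j] <;> simp +contextual
  rw [ell_add, h1, h2, h3, norm_smul, mul_pow, Real.norm_eq_abs, sq_abs]
  ring

theorem ell_nonneg {V : Type*} [Fintype V] {d : ℕ}
    (g : V → EuclideanSpace ℝ (Fin d)) (b : EuclideanSpace ℝ (Fin d))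
    (lam : ℝ) (hlam : 0 < lam) (w : V → ℝ) : 0 ≤ ell g b lam w := by
  unfold ell
  positivity

theorem EErr_le {V : Type*} [Fintype V] {d : ℕ}
    (g : V → EuclideanSpace ℝ (Fin d)) (b : EuclideanSpace ℝ (Fin d))
    (lam : ℝ) (hlam : 0 < lam) (S : Finset V) (w : V → ℝ) (hw : ∀ i ∉ S, w i = 0) :
    EErr g b lam S ≤ ell g b lam w := by
  refine csInf_le ⟨0, ?_⟩ ⟨w, hw, rfl⟩
  rintro y ⟨w, -, rfl⟩
  exact ell_nonneg g b lam hlam w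

theorem le_EErr {V : Type*} [Fintype V] {d : ℕ}
    (g : V → EuclideanSpace ℝ (Fin d)) (b : EuclideanSpace ℝ (Fin d))
    (lam : ℝ) (S : Finset V) (a : ℝ)
    (h : ∀ w : V → ℝ, (∀ i ∉ S, w i = 0) → a ≤ ell g b lam w) :
    a ≤ EErr g b lam S := by
  refine le_csInf ⟨_, 0, by simp, rfl⟩ ?_
  rintro y ⟨w, hw, rfl⟩
  exact h w hw

theorem exists_min {V : Type*} [Fintype V] {d : ℕ}
    (g : V → EuclideanSpace ℝ (Fin d)) (b : EuclideanSpace ℝ (Fin d))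
    (lam : ℝ) (hlam : 0 < lam) (S : Finset V) :
    ∃ u : V → ℝ, (∀ i ∉ S, u i = 0) ∧
      ∀ w : V → ℝ, (∀ i ∉ S, w i = 0) → ell g b lam u ≤ ell g b lam w := by
  have hc : Continuous (ell g b lam) := by
    unfold ell
    fun_prop
  let K : Set (V → ℝ) := {w | (∀ i ∉ S, w i = 0) ∧ ell g b lam w ≤ ell g b lam 0}
  have hcl : IsClosed K := by
    refine IsClosed.inter (s₁ := {w : V → ℝ | ∀ i ∉ S, w i = 0}) ?_
      (isClosed_le hc continuous_const)
    simp only [Set.ofPred_forall]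
    exact isClosed_iInter fun i => isClosed_iInter fun _ =>
      isClosed_eq (continuous_apply i) continuous_const
  let R : ℝ := Real.sqrt (ell g b lam 0 / lam)
  have hK : IsCompact K := by
    refine (isCompact_univ_pi (fun _ : V => isCompact_Icc (a := -R) (b := R))).of_isClosed_subset
      hcl ?_
    rintro w ⟨-, hw⟩ i -
    rw [Set.mem_Icc, ← abs_le]
    apply Real.abs_le_sqrt
    rw [le_div_iff₀ hlam]
    have h1 : (w i) ^ 2 ≤ ∑ i, (w i) ^ 2 :=
      Finset.single_le_sum (f := fun i => (w i) ^ 2) (fun i _ => sq_nonneg _) (Finset.mem_univ i)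
    have h2 : lam * ∑ i, (w i) ^ 2 ≤ ell g b lam w := by
      unfold ell
      have := sq_nonneg ‖(∑ i, w i • g i) - b‖
      linarith
    nlinarith
  obtain ⟨u, hu, hmin⟩ := hK.exists_isMinOn ⟨0, by simp [K]⟩ hc.continuousOn
  refine ⟨u, hu.1, fun w hw => ?_⟩
  by_cases h : ell g b lam w ≤ ell g b lam 0
  · exact hmin (show w ∈ K from ⟨hw, h⟩)
  · exact hu.2.trans (le_of_not_ge h)

/-- The set function `F_λ(S) = L_max − E(S)` is `γ_D`-weakly submodular on
subsets of size at most `M`, where `γ_D = λ/(λ + M G²)`. -/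
theorem weakly_submodular_gradient_matching
    {V : Type*} [Fintype V] [DecidableEq V] {d : ℕ} (hd : 1 ≤ d)
    (g : V → EuclideanSpace ℝ (Fin d)) (G : ℝ) (hG : ∀ i, ‖g i‖ ≤ G)
    (b : EuclideanSpace ℝ (Fin d)) (lam : ℝ) (hlam : 0 < lam)
    (M : ℕ) (hM : 0 < M)
    (S T : Finset V) (hST : Disjoint S T) (hcard : (S ∪ T).card ≤ M) :
    ∑ j ∈ T, (EErr g b lam S - EErr g b lam (S ∪ {j})) ≥
      (lam / (lam + M * G ^ 2)) * (EErr g b lam S - EErr g b lam (S ∪ T)) := by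
  obtain ⟨u, hu, hmin⟩ := exists_min g b lam hlam S
  have hES : EErr g b lam S = ell g b lam u :=
    le_antisymm (EErr_le g b lam hlam S u hu) (le_EErr g b lam S _ hmin)
  have hgrad : ∀ i ∈ S, gradC g b lam u i = 0 := by
    intro i hi
    have ha : 0 < ‖g i‖ ^ 2 + lam := by positivity
    have h := hmin (u + (Pi.single i (-gradC g b lam u i / (2 * (‖g i‖ ^ 2 + lam))) : V → ℝ)) (by
      intro k hk
      have : k ≠ i := by rintro rfl; exact hk hi
      simp [hu k hk, this])
    rw [ell_single] at h
    have h2 : gradC g b lam u i * (-gradC g b lam u i / (2 * (‖g i‖ ^ 2 + lam)))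
      + (‖g i‖ ^ 2 + lam) * (-gradC g b lam u i / (2 * (‖g i‖ ^ 2 + lam))) ^ 2
      = -(gradC g b lam u i ^ 2 / (4 * (‖g i‖ ^ 2 + lam))) := by
      field_simp
      ring
    have h3 : gradC g b lam u i ^ 2 / (4 * (‖g i‖ ^ 2 + lam)) ≤ 0 := by linarith
    rw [div_le_iff₀ (by positivity)] at h3
    have h4 : gradC g b lam u i ^ 2 ≤ 0 := by linarith
    exact pow_eq_zero_iff (two_ne_zero) |>.1 (le_antisymm h4 (sq_nonneg _))
  have hA : ∀ j ∈ T, gradC g b lam u j ^ 2 / (4 * (lam + M * G ^ 2)) ≤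
      EErr g b lam S - EErr g b lam (S ∪ {j}) := by
    intro j hj
    have ha : 0 < ‖g j‖ ^ 2 + lam := by positivity
    have h := EErr_le g b lam hlam (S ∪ {j})
      (u + (Pi.single j (-gradC g b lam u j / (2 * (‖g j‖ ^ 2 + lam))) : V → ℝ)) (by
      intro k hk
      simp only [Finset.mem_union, Finset.mem_singleton, not_or] at hk
      simp [hu k hk.1, hk.2])
    rw [ell_single] at h
    have h2 : gradC g b lam u j * (-gradC g b lam u j / (2 * (‖g j‖ ^ 2 + lam)))
      + (‖g j‖ ^ 2 + lam) * (-gradC g b lam u j / (2 * (‖g j‖ ^ 2 + lam))) ^ 2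
      = -(gradC g b lam u j ^ 2 / (4 * (‖g j‖ ^ 2 + lam))) := by
      field_simp
      ring
    have hle : ‖g j‖ ^ 2 + lam ≤ lam + M * G ^ 2 := by
      have h5 : ‖g j‖ ^ 2 ≤ G ^ 2 := by
        have := hG j
        gcongr
      have h6 : (1 : ℝ) ≤ M := by exact_mod_cast hM
      nlinarith [sq_nonneg G]
    have h3 : gradC g b lam u j ^ 2 / (4 * (lam + M * G ^ 2)) ≤
        gradC g b lam u j ^ 2 / (4 * (‖g j‖ ^ 2 + lam)) := by
      gcongr
    linarith
  have hB : EErr g b lam S - (∑ j ∈ T, gradC g b lam u j ^ 2) / (4 * lam) ≤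
      EErr g b lam (S ∪ T) := by
    refine le_EErr g b lam _ _ fun v hv => ?_
    have hv' : v = u + (v - u) := by abel
    rw [hv', ell_add, hES]
    have hn := sq_nonneg ‖∑ i, (v - u) i • g i‖
    have key : -((∑ j ∈ T, gradC g b lam u j ^ 2) / (4 * lam)) ≤
        ∑ i, gradC g b lam u i * (v - u) i + lam * ∑ i, ((v - u) i) ^ 2 := by
      rw [Finset.mul_sum, ← Finset.sum_add_distrib, Finset.sum_div, ← Finset.sum_neg_distrib]
      calc _ ≤ ∑ i ∈ T, (gradC g b lam u i * (v - u) i + lam * ((v - u) i) ^ 2) := by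
            refine Finset.sum_le_sum fun i _ => ?_
            have : gradC g b lam u i * (v - u) i + lam * ((v - u) i) ^ 2
              + gradC g b lam u i ^ 2 / (4 * lam)
              = (2 * lam * (v - u) i + gradC g b lam u i) ^ 2 / (4 * lam) := by
              field_simp
              ring
            have h0 : 0 ≤ (2 * lam * (v - u) i + gradC g b lam u i) ^ 2 / (4 * lam) := by
              positivity
            linarith
        _ ≤ _ := by
            refine Finset.sum_le_sum_of_subset_of_nonneg (Finset.subset_univ _) fun i _ hi => ?_
            by_cases hS : i ∈ S
            · rw [hgrad i hS]
              have := mul_nonneg hlam.le (sq_nonneg ((v - u) i))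
              linarith
            · simp [hu i hS, hv i (by simp [hS, hi])]
    linarith
  have hD : 0 < lam + M * G ^ 2 := by positivity
  have hsum := Finset.sum_le_sum hA
  rw [← Finset.sum_div] at hsum
  refine ge_iff_le.2 (le_trans ?_ hsum)
  calc _ ≤ lam / (lam + M * G ^ 2) * ((∑ j ∈ T, gradC g b lam u j ^ 2) / (4 * lam)) := by
        gcongr
        linarith
    _ = _ := by field_simp
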